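/- Let 0 < ε < 1/2 and suppose the parameter b satisfies b/R^(1+ε) = ((1+ε)^(3ε−1)/(2ε·ε)^ε)·(γ_d/R)^(1−ε) (i.e. the choice of Theorem 3 with δ = ε). If a : ℕ → E is an ℓ-margitron run of length t_c ≥ 1 that has converged after t_c updates, i.e. ⟨a_{t_c}, y_k⟩ > b·‖a_{t_c}‖^(1−ε) for every k ∈ {1, …, n}, then the achieved directional margin γ'_d := min_k ⟨a_{t_c}/‖a_{t_c}‖, y_k⟩ satisfies γ'_d ≥ (1 + 2ε)^(−1)·γ_d ≥ (1 − 2ε)·γ_d. -/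

import Mathlib

open scoped RealInnerProductSpace

/-!
Along a run, `γ t ≤ ‖a t‖` because every update advances by at least `γ` in the direction `u`,
while a tangent-line estimate bounds the growth of `‖a t‖ ^ (1 + ε)` per update by
`(1 + ε) b + (1 + ε) / 2 * R ^ 2 * ‖a t‖ ^ (ε - 1)`. Summing the second bound with the help of the
first gives, for the final norm `N`,
`γ N ≤ (1 + ε) b N ^ (1 - ε) + (1 + ε) ^ 2 / (2 ε) * R ^ 2`.
If the margin guaranteed at convergence, `b / N ^ ε`, were smaller than `γ / (1 + ε + δ)`, this
would bound `N ^ (1 - ε)` from above, whereas `N ^ ε > (1 + ε) b / γ` bounds `N` from below.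
Eliminating `N` leaves a strict upper bound on `b`, which the prescribed value of `b` just fails
to satisfy; this is where the constant `(1 + ε) ^ (3 ε - 1) / (2 ε δ) ^ ε` comes from.
-/

theorem one_sub_le_inv_one_add {x : ℝ} (hx : -1 < x) : 1 - x ≤ (1 + x)⁻¹ := by
  rw [← one_div, le_div_iff₀ (by linarith)]
  linarith [sq_nonneg x]

theorem rpow_add_le_rpow_add_mul {x d s : ℝ} (hx : 0 < x) (hxd : 0 ≤ x + d) (hs₀ : 0 ≤ s)
    (hs₁ : s ≤ 1) : (x + d) ^ s ≤ x ^ s + s * x ^ (s - 1) * d := by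
  have hfactor : x + d = x * (1 + d / x) := by field_simp
  have hratio : 0 ≤ 1 + d / x := nonneg_of_mul_nonneg_right (hfactor ▸ hxd) hx
  calc (x + d) ^ s = x ^ s * (1 + d / x) ^ s := by rw [hfactor, Real.mul_rpow hx.le hratio]
    _ ≤ x ^ s * (1 + s * (d / x)) := by
      gcongr
      exact rpow_one_add_le_one_add_mul_self (by linarith) hs₀ hs₁
    _ = x ^ s + s * x ^ (s - 1) * d := by
      rw [Real.rpow_sub_one hx.ne']
      ring

theorem sum_range_succ_rpow_sub_one_le {p : ℝ} (hp₀ : p ≠ 0) (hp₁ : p ≤ 1) (n : ℕ) :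
    ∑ m ∈ Finset.range (n + 1), ((m : ℝ) + 1) ^ (p - 1) ≤ 1 + (((n : ℝ) + 1) ^ p - 1) / p := by
  have hanti : AntitoneOn (fun x : ℝ => x ^ (p - 1)) (Set.Icc 1 (1 + n)) :=
    (Real.antitoneOn_rpow_Ioi_of_exponent_nonpos (sub_nonpos.2 hp₁)).mono
      fun x hx => zero_lt_one.trans_le hx.1
  have hzero : (0 : ℝ) ∉ Set.uIcc (1 : ℝ) (1 + n) := by
    rw [Set.uIcc_of_le (by simp)]
    exact fun h => zero_lt_one.not_ge h.1
  have hintegral : ∫ x in (1 : ℝ)..1 + n, x ^ (p - 1) = (((n : ℝ) + 1) ^ p - 1) / p := by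
    rw [integral_rpow (Or.inr ⟨fun h => hp₀ (by linarith), hzero⟩), sub_add_cancel,
      Real.one_rpow, add_comm (1 : ℝ)]
  rw [Finset.sum_range_succ', ← hintegral, add_comm]
  simpa [add_comm] using hanti.sum_le_integral

theorem one_add_mul_sum_range_rpow_sub_one_le {p : ℝ} (hp₀ : 0 < p) (hp₁ : p ≤ 1) (n : ℕ) :
    1 + (1 + p) / 2 * ∑ m ∈ Finset.range n, ((m : ℝ) + 1) ^ (p - 1) ≤
      (1 + p) ^ 2 / (2 * p) * ((n : ℝ) + 1) ^ p := by
  have hsum : ∑ m ∈ Finset.range n, ((m : ℝ) + 1) ^ (p - 1) ≤ 1 + (((n : ℝ) + 1) ^ p - 1) / p :=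
    (Finset.sum_le_sum_of_subset_of_nonneg (Finset.range_mono n.le_succ)
      fun _ _ _ => by positivity).trans (sum_range_succ_rpow_sub_one_le hp₀.ne' hp₁ n)
  have hone : 1 ≤ ((n : ℝ) + 1) ^ p := Real.one_le_rpow (by simp) hp₀.le
  have hslack : 0 ≤ (1 + p) / 2 * (((n : ℝ) + 1) ^ p - 1) + (1 - p) / (2 * p) :=
    add_nonneg (mul_nonneg (by positivity) (sub_nonneg.2 hone))
      (div_nonneg (sub_nonneg.2 hp₁) (by positivity))
  calc 1 + (1 + p) / 2 * ∑ m ∈ Finset.range n, ((m : ℝ) + 1) ^ (p - 1)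
      ≤ 1 + (1 + p) / 2 * (1 + (((n : ℝ) + 1) ^ p - 1) / p) := by gcongr
    _ = (1 + p) ^ 2 / (2 * p) * ((n : ℝ) + 1) ^ p -
          ((1 + p) / 2 * (((n : ℝ) + 1) ^ p - 1) + (1 - p) / (2 * p)) := by
        field_simp
        ring
    _ ≤ (1 + p) ^ 2 / (2 * p) * ((n : ℝ) + 1) ^ p := sub_le_self _ hslack

theorem lt_of_mul_rpow_mul_div_rpow_lt {b c s γ R p : ℝ} (hb : 0 < b) (hc : 0 < c) (hs : 0 < s)
    (hγ : 0 < γ) (hR : 0 ≤ R) (h : (c * b) ^ p * (s * b / γ) ^ (1 - p) < (s * R) ^ (2 * p)) :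
    b < s ^ (3 * p - 1) / c ^ p * γ ^ (1 - p) * R ^ (2 * p) := by
  have hsplit : b ^ p * b ^ (1 - p) = b := by
    rw [← Real.rpow_add hb, add_sub_cancel, Real.rpow_one]
  have hexponent : s ^ (2 * p) = s ^ (3 * p - 1) * s ^ (1 - p) := by
    rw [← Real.rpow_add hs]
    ring_nf
  have hleft : (c * b) ^ p * (s * b / γ) ^ (1 - p) = s ^ (1 - p) * (b * c ^ p / γ ^ (1 - p)) := by
    rw [Real.mul_rpow hc.le hb.le, Real.div_rpow (by positivity) hγ.le, Real.mul_rpow hs.le hb.le]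
    linear_combination c ^ p * s ^ (1 - p) / γ ^ (1 - p) * hsplit
  have hright : (s * R) ^ (2 * p) = s ^ (1 - p) * (s ^ (3 * p - 1) * R ^ (2 * p)) := by
    rw [Real.mul_rpow hs.le hR, hexponent]
    ring
  rw [hleft, hright, mul_lt_mul_iff_right₀ (by positivity), div_lt_iff₀ (by positivity),
    ← lt_div_iff₀ (by positivity)] at h
  exact h.trans_eq (by ring)

theorem mul_rpow_le_of_mul_le_add {N γ R ε δ b : ℝ} (hN : 0 < N) (hγ : 0 < γ) (hR : 0 < R)
    (hε₀ : 0 < ε) (hε₁ : ε ≤ 1) (hδ : 0 < δ)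
    (hb : (1 + ε) ^ (3 * ε - 1) / (2 * ε * δ) ^ ε * γ ^ (1 - ε) * R ^ (2 * ε) ≤ b)
    (h : γ * N ≤ (1 + ε) * b * N ^ (1 - ε) + (1 + ε) ^ 2 / (2 * ε) * R ^ 2) :
    γ * N ^ ε ≤ (1 + ε + δ) * b := by
  by_contra! hlt
  have hb₀ : 0 < b := lt_of_lt_of_le (by positivity) hb
  have hupper : 2 * ε * δ * b * N ^ (1 - ε) < ((1 + ε) * R) ^ 2 := by
    have hgap : (1 + ε + δ) * b * N ^ (1 - ε) < γ * N :=
      calc (1 + ε + δ) * b * N ^ (1 - ε) < γ * N ^ ε * N ^ (1 - ε) := by gcongr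
        _ = γ * N := by rw [mul_assoc, ← Real.rpow_add hN, add_sub_cancel, Real.rpow_one]
    calc 2 * ε * δ * b * N ^ (1 - ε) = 2 * ε * (δ * b * N ^ (1 - ε)) := by ring
      _ < 2 * ε * ((1 + ε) ^ 2 / (2 * ε) * R ^ 2) := by
        gcongr 2 * ε * ?_
        linarith
      _ = ((1 + ε) * R) ^ 2 := by field_simp
  have hlower : (1 + ε) * b / γ ≤ N ^ ε := by
    rw [div_le_iff₀' hγ]
    linarith [mul_pos hδ hb₀]
  have helimination :=
    calc (2 * ε * δ * b) ^ ε * ((1 + ε) * b / γ) ^ (1 - ε)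
        ≤ (2 * ε * δ * b) ^ ε * (N ^ ε) ^ (1 - ε) := by gcongr
      _ = (2 * ε * δ * b * N ^ (1 - ε)) ^ ε := by
        rw [← Real.rpow_mul hN.le, mul_comm ε (1 - ε), Real.rpow_mul hN.le,
          ← Real.mul_rpow (by positivity) (by positivity)]
      _ < (((1 + ε) * R) ^ 2) ^ ε := by gcongr
      _ = ((1 + ε) * R) ^ (2 * ε) := by
        rw [← Real.rpow_natCast_mul (by positivity), Nat.cast_ofNat]
  exact (lt_of_mul_rpow_mul_div_rpow_lt hb₀ (by positivity) (by positivity) hγ hR.le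
    helimination).not_ge hb

section InnerProductSpace

variable {ι E : Type*} [NormedAddCommGroup E] [InnerProductSpace ℝ E]

theorem norm_add_rpow_le {x : E} (hx : x ≠ 0) (v : E) {p : ℝ} (hp₀ : 0 ≤ p) (hp₂ : p ≤ 2) :
    ‖x + v‖ ^ p ≤ ‖x‖ ^ p + p / 2 * ‖x‖ ^ (p - 2) * (2 * ⟪x, v⟫ + ‖v‖ ^ 2) := by
  have hsq : ∀ (w : E) (s : ℝ), (‖w‖ ^ 2) ^ s = ‖w‖ ^ (2 * s) := fun w s => by
    rw [← Real.rpow_natCast_mul (norm_nonneg w), Nat.cast_ofNat]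
  have hexpand : ‖x + v‖ ^ 2 = ‖x‖ ^ 2 + (2 * ⟪x, v⟫ + ‖v‖ ^ 2) := by
    rw [norm_add_sq_real, add_assoc]
  have htangent := rpow_add_le_rpow_add_mul (pow_pos (norm_pos_iff.2 hx) 2)
    (hexpand ▸ sq_nonneg ‖x + v‖) (div_nonneg hp₀ zero_le_two) (s := p / 2) (by linarith)
  rwa [← hexpand, hsq, hsq, hsq, mul_sub, mul_div_cancel₀ p two_ne_zero, mul_one] at htangent

theorem le_norm_of_le_inner {u x : E} {c : ℝ} (hu : ‖u‖ ≤ 1) (h : c ≤ ⟪u, x⟫) : c ≤ ‖x‖ :=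
  h.trans ((real_inner_le_norm u x).trans (mul_le_of_le_one_left (norm_nonneg x) hu))

/-- An `ℓ`-margitron run of length `T` on the patterns `y`: starting from `a 0 = 0`, each of the
first `T` updates adds a pattern whose inner product with the current vector is at most the
threshold `b * ‖a t‖ ^ (1 - ε)`, or `0` at `t = 0`. Values of `a` beyond `T` are unconstrained. -/
structure IsMargitronRun (y : ι → E) (b ε : ℝ) (T : ℕ) (a : ℕ → E) : Prop where
  zero : a 0 = 0
  update : ∀ t < T, ∃ k, a (t + 1) = a t + y k ∧
    ⟪a t, y k⟫ ≤ if t = 0 then 0 else b * ‖a t‖ ^ (1 - ε)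

namespace IsMargitronRun

variable {y : ι → E} {u : E} {a : ℕ → E} {R γ ε b : ℝ} {T t : ℕ}

theorem mul_le_norm (h : IsMargitronRun y b ε T a) (hu : ‖u‖ ≤ 1) (hmargin : ∀ k, γ ≤ ⟪u, y k⟫)
    (ht : t ≤ T) : γ * t ≤ ‖a t‖ := by
  refine le_norm_of_le_inner hu ?_
  induction t with
  | zero => simp [h.zero]
  | succ t ih =>
    obtain ⟨k, hk, -⟩ := h.update t ht
    rw [hk, inner_add_right, Nat.cast_succ, mul_add_one]
    exact add_le_add (ih (Nat.le_of_succ_le ht)) (hmargin k)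

theorem norm_one_le (h : IsMargitronRun y b ε T a) (hR : ∀ k, ‖y k‖ ≤ R) (hT : 0 < T) :
    ‖a 1‖ ≤ R := by
  obtain ⟨k, hk, -⟩ := h.update 0 hT
  rw [hk, h.zero, zero_add]
  exact hR k

theorem margin_le (h : IsMargitronRun y b ε T a) (hR : ∀ k, ‖y k‖ ≤ R) (hu : ‖u‖ ≤ 1)
    (hmargin : ∀ k, γ ≤ ⟪u, y k⟫) (hT : 0 < T) : γ ≤ R := by
  obtain ⟨k, -⟩ := h.update 0 hT
  exact (le_norm_of_le_inner hu (hmargin k)).trans (hR k)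

theorem norm_succ_rpow_le (h : IsMargitronRun y b ε T a) (hR : ∀ k, ‖y k‖ ≤ R) (hε₀ : -1 ≤ ε)
    (hε₁ : ε ≤ 1) (ht : t < T) (hat : a t ≠ 0) :
    ‖a (t + 1)‖ ^ (1 + ε) ≤
      ‖a t‖ ^ (1 + ε) + (1 + ε) * b + (1 + ε) / 2 * R ^ 2 * ‖a t‖ ^ (ε - 1) := by
  obtain ⟨k, hk, hmis⟩ := h.update t ht
  have ht₀ : t ≠ 0 := by
    rintro rfl
    exact hat h.zero
  rw [if_neg ht₀] at hmis
  have hnorm : 0 < ‖a t‖ := norm_pos_iff.2 hat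
  have hcancel : ‖a t‖ ^ (ε - 1) * ‖a t‖ ^ (1 - ε) = 1 := by
    rw [← Real.rpow_add hnorm, sub_add_sub_cancel, sub_self, Real.rpow_zero]
  have hexp : 1 + ε - 2 = ε - 1 := by ring
  calc ‖a (t + 1)‖ ^ (1 + ε)
      ≤ ‖a t‖ ^ (1 + ε)
          + (1 + ε) / 2 * ‖a t‖ ^ (ε - 1) * (2 * ⟪a t, y k⟫ + ‖y k‖ ^ 2) := by
        rw [hk, ← hexp]
        exact norm_add_rpow_le hat (y k) (by linarith) (by linarith)
    _ ≤ ‖a t‖ ^ (1 + ε)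
          + (1 + ε) / 2 * ‖a t‖ ^ (ε - 1) * (2 * (b * ‖a t‖ ^ (1 - ε)) + R ^ 2) := by
        have : 0 ≤ 1 + ε := by linarith
        gcongr
        exact hR k
    _ = ‖a t‖ ^ (1 + ε) + (1 + ε) * b + (1 + ε) / 2 * R ^ 2 * ‖a t‖ ^ (ε - 1) := by
        linear_combination (1 + ε) * b * hcancel

theorem norm_succ_rpow_le_sum (h : IsMargitronRun y b ε T a) (hR : ∀ k, ‖y k‖ ≤ R)
    (hu : ‖u‖ ≤ 1) (hγ : 0 < γ) (hmargin : ∀ k, γ ≤ ⟪u, y k⟫) (hε₀ : -1 ≤ ε) (hε₁ : ε ≤ 1)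
    (ht : t < T) :
    ‖a (t + 1)‖ ^ (1 + ε) ≤ R ^ (1 + ε) + (1 + ε) * b * t +
      (1 + ε) / 2 * R ^ 2 * γ ^ (ε - 1) * ∑ m ∈ Finset.range t, ((m : ℝ) + 1) ^ (ε - 1) := by
  have hε_add : 0 ≤ 1 + ε := by linarith
  induction t with
  | zero =>
    simpa using Real.rpow_le_rpow (norm_nonneg _) (h.norm_one_le hR ht) hε_add
  | succ t ih =>
    have hnorm : γ * ((t : ℝ) + 1) ≤ ‖a (t + 1)‖ := by
      exact_mod_cast h.mul_le_norm hu hmargin ht.le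
    have hpos : 0 < γ * ((t : ℝ) + 1) := by positivity
    have hpow : ‖a (t + 1)‖ ^ (ε - 1) ≤ γ ^ (ε - 1) * ((t : ℝ) + 1) ^ (ε - 1) := by
      rw [← Real.mul_rpow hγ.le (by positivity)]
      exact Real.rpow_le_rpow_of_nonpos hpos hnorm (by linarith)
    calc ‖a (t + 1 + 1)‖ ^ (1 + ε)
        ≤ ‖a (t + 1)‖ ^ (1 + ε) + (1 + ε) * b + (1 + ε) / 2 * R ^ 2 * ‖a (t + 1)‖ ^ (ε - 1) :=
          h.norm_succ_rpow_le hR hε₀ hε₁ ht (norm_pos_iff.1 (hpos.trans_le hnorm))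
      _ ≤ R ^ (1 + ε) + (1 + ε) * b * t +
            (1 + ε) / 2 * R ^ 2 * γ ^ (ε - 1) * ∑ m ∈ Finset.range t, ((m : ℝ) + 1) ^ (ε - 1) +
            (1 + ε) * b + (1 + ε) / 2 * R ^ 2 * (γ ^ (ε - 1) * ((t : ℝ) + 1) ^ (ε - 1)) := by
          gcongr
          exact ih (Nat.lt_of_succ_lt ht)
      _ = R ^ (1 + ε) + (1 + ε) * b * (t + 1 : ℕ) + (1 + ε) / 2 * R ^ 2 * γ ^ (ε - 1) *
            ∑ m ∈ Finset.range (t + 1), ((m : ℝ) + 1) ^ (ε - 1) := by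
          rw [Finset.sum_range_succ]
          push_cast
          ring

theorem norm_rpow_le (h : IsMargitronRun y b ε T a) (hR : ∀ k, ‖y k‖ ≤ R) (hu : ‖u‖ ≤ 1)
    (hγ : 0 < γ) (hmargin : ∀ k, γ ≤ ⟪u, y k⟫) (hε₀ : 0 < ε) (hε₁ : ε ≤ 1) (hb : 0 ≤ b)
    (ht₀ : t ≠ 0) (htT : t ≤ T) :
    ‖a t‖ ^ (1 + ε) ≤
      (1 + ε) * b * t + (1 + ε) ^ 2 / (2 * ε) * R ^ 2 * γ ^ (ε - 1) * (t : ℝ) ^ ε := by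
  obtain ⟨s, rfl⟩ := Nat.exists_eq_succ_of_ne_zero ht₀
  have hγR : γ ≤ R := h.margin_le hR hu hmargin (Nat.zero_lt_of_lt htT)
  have hinit : R ^ (1 + ε) ≤ R ^ 2 * γ ^ (ε - 1) := by
    have hexp : 1 + ε = 2 + (ε - 1) := by ring
    rw [hexp, Real.rpow_add (hγ.trans_le hγR), Real.rpow_two]
    gcongr R ^ 2 * ?_
    exact Real.rpow_le_rpow_of_nonpos hγ hγR (sub_nonpos.2 hε₁)
  push_cast
  calc ‖a (s + 1)‖ ^ (1 + ε)
      ≤ R ^ (1 + ε) + (1 + ε) * b * s +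
          (1 + ε) / 2 * R ^ 2 * γ ^ (ε - 1) * ∑ m ∈ Finset.range s, ((m : ℝ) + 1) ^ (ε - 1) :=
        h.norm_succ_rpow_le_sum hR hu hγ hmargin (by linarith) hε₁ htT
    _ ≤ R ^ 2 * γ ^ (ε - 1) + (1 + ε) * b * (s + 1) +
          (1 + ε) / 2 * R ^ 2 * γ ^ (ε - 1) * ∑ m ∈ Finset.range s, ((m : ℝ) + 1) ^ (ε - 1) := by
        gcongr
        exact le_add_of_nonneg_right zero_le_one
    _ = (1 + ε) * b * (s + 1) + R ^ 2 * γ ^ (ε - 1) *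
          (1 + (1 + ε) / 2 * ∑ m ∈ Finset.range s, ((m : ℝ) + 1) ^ (ε - 1)) := by ring
    _ ≤ (1 + ε) * b * (s + 1) + R ^ 2 * γ ^ (ε - 1) *
          ((1 + ε) ^ 2 / (2 * ε) * ((s : ℝ) + 1) ^ ε) := by
        gcongr
        exact one_add_mul_sum_range_rpow_sub_one_le hε₀ hε₁ s
    _ = (1 + ε) * b * (s + 1) +
          (1 + ε) ^ 2 / (2 * ε) * R ^ 2 * γ ^ (ε - 1) * ((s : ℝ) + 1) ^ ε := by ring

theorem mul_norm_le (h : IsMargitronRun y b ε T a) (hR : ∀ k, ‖y k‖ ≤ R) (hu : ‖u‖ ≤ 1)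
    (hγ : 0 < γ) (hmargin : ∀ k, γ ≤ ⟪u, y k⟫) (hε₀ : 0 < ε) (hε₁ : ε ≤ 1) (hb : 0 ≤ b)
    (ht₀ : t ≠ 0) (htT : t ≤ T) :
    γ * ‖a t‖ ≤ (1 + ε) * b * ‖a t‖ ^ (1 - ε) + (1 + ε) ^ 2 / (2 * ε) * R ^ 2 := by
  have hlow : γ * t ≤ ‖a t‖ := h.mul_le_norm hu hmargin htT
  have hγt : 0 < γ * t := by positivity
  have hnorm : 0 < ‖a t‖ := hγt.trans_le hlow
  have hγpow : γ * γ ^ (ε - 1) = γ ^ ε := by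
    rw [mul_comm, ← Real.rpow_add_one hγ.ne', sub_add_cancel]
  have hleft : ‖a t‖ ^ (1 + ε) = ‖a t‖ * ‖a t‖ ^ ε := by
    rw [Real.rpow_add hnorm, Real.rpow_one]
  have hright : ‖a t‖ ^ (1 - ε) * ‖a t‖ ^ ε = ‖a t‖ := by
    rw [← Real.rpow_add hnorm, sub_add_cancel, Real.rpow_one]
  refine le_of_mul_le_mul_right ?_ (Real.rpow_pos_of_pos hnorm ε)
  calc γ * ‖a t‖ * ‖a t‖ ^ ε = γ * ‖a t‖ ^ (1 + ε) := by rw [hleft, mul_assoc]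
    _ ≤ γ * ((1 + ε) * b * t + (1 + ε) ^ 2 / (2 * ε) * R ^ 2 * γ ^ (ε - 1) * (t : ℝ) ^ ε) := by
        gcongr
        exact h.norm_rpow_le hR hu hγ hmargin hε₀ hε₁ hb ht₀ htT
    _ = (1 + ε) * b * (γ * t) + (1 + ε) ^ 2 / (2 * ε) * R ^ 2 * (γ * t) ^ ε := by
        rw [Real.mul_rpow hγ.le t.cast_nonneg]
        linear_combination (1 + ε) ^ 2 / (2 * ε) * R ^ 2 * (t : ℝ) ^ ε * hγpow
    _ ≤ (1 + ε) * b * ‖a t‖ + (1 + ε) ^ 2 / (2 * ε) * R ^ 2 * ‖a t‖ ^ ε := by gcongr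
    _ = ((1 + ε) * b * ‖a t‖ ^ (1 - ε) + (1 + ε) ^ 2 / (2 * ε) * R ^ 2) * ‖a t‖ ^ ε := by
        linear_combination -(1 + ε) * b * hright

end IsMargitronRun

theorem stmt15_general {y : ι → E} {u : E} {a : ℕ → E} {R γ ε δ b : ℝ} {T : ℕ}
    (hrun : IsMargitronRun y b ε T a) (hR : ∀ k, ‖y k‖ ≤ R) (hu : ‖u‖ ≤ 1) (hγ : 0 < γ)
    (hmargin : ∀ k, γ ≤ ⟪u, y k⟫) (hε₀ : 0 < ε) (hε₁ : ε ≤ 1) (hδ : 0 < δ)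
    (hb : (1 + ε) ^ (3 * ε - 1) / (2 * ε * δ) ^ ε * (γ / R) ^ (1 - ε) ≤ b / R ^ (1 + ε))
    (hT : 1 ≤ T) {k : ι} (hconv : b * ‖a T‖ ^ (1 - ε) ≤ ⟪a T, y k⟫) :
    (1 + ε + δ)⁻¹ * γ ≤ ⟪‖a T‖⁻¹ • a T, y k⟫ := by
  have hR₀ : 0 < R := hγ.trans_le (hrun.margin_le hR hu hmargin hT)
  have hb' : (1 + ε) ^ (3 * ε - 1) / (2 * ε * δ) ^ ε * γ ^ (1 - ε) * R ^ (2 * ε) ≤ b := by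
    have hexp : 1 + ε = 2 * ε + (1 - ε) := by ring
    rw [le_div_iff₀ (by positivity)] at hb
    refine le_of_eq_of_le ?_ hb
    rw [Real.div_rpow hγ.le hR₀.le, hexp, Real.rpow_add hR₀]
    field_simp
  have hb₀ : 0 ≤ b := le_trans (by positivity) hb'
  have hN : 0 < ‖a T‖ :=
    lt_of_lt_of_le (by positivity) (hrun.mul_le_norm hu hmargin le_rfl)
  have hkey : γ * ‖a T‖ ^ ε ≤ (1 + ε + δ) * b :=
    mul_rpow_le_of_mul_le_add hN hγ hR₀ hε₀ hε₁ hδ hb'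
      (hrun.mul_norm_le hR hu hγ hmargin hε₀ hε₁ hb₀ (Nat.ne_of_gt hT) le_rfl)
  have hpow : ‖a T‖ ^ (1 - ε) = ‖a T‖ / ‖a T‖ ^ ε := by rw [Real.rpow_sub hN, Real.rpow_one]
  calc (1 + ε + δ)⁻¹ * γ ≤ b / ‖a T‖ ^ ε := by
        rwa [le_div_iff₀ (by positivity), mul_assoc, inv_mul_le_iff₀ (by positivity)]
    _ = ‖a T‖⁻¹ * (b * ‖a T‖ ^ (1 - ε)) := by
        rw [hpow]
        field_simp
    _ ≤ ⟪‖a T‖⁻¹ • a T, y k⟫ := by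
        rw [real_inner_smul_left]
        gcongr

end InnerProductSpace

/-- with 0 < ε < 1/2 and b/R^(1+ε) = ((1+ε)^(3ε−1)/(2ε·ε)^ε)·(γ_d/R)^(1−ε),
a converged ℓ-margitron run achieves γ'_d ≥ (1+2ε)⁻¹·γ_d ≥ (1−2ε)·γ_d. -/
theorem stmt15 {E : Type*} [NormedAddCommGroup E] [InnerProductSpace ℝ E]
    {n : ℕ} (hn : 0 < n) (y : Fin n → E)
    (R : ℝ) (hR : IsGreatest (Set.range (fun k : Fin n => ‖y k‖)) R)
    (u : E) (hu : ‖u‖ = 1) (γd : ℝ) (hγd : 0 < γd)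
    (hmargin : ∀ k : Fin n, γd ≤ ⟪u, y k⟫)
    (ε b : ℝ) (hε : 0 < ε) (hε1 : ε < 1 / 2) (hb : 0 < b)
    (hbeq : b / R ^ (1 + ε) =
      ((1 + ε) ^ (3 * ε - 1) / (2 * ε * ε) ^ ε) * (γd / R) ^ (1 - ε))
    (tc : ℕ) (htc : 1 ≤ tc) (a : ℕ → E) (ha0 : a 0 = 0)
    (hrun : ∀ t : ℕ, t < tc → ∃ k : Fin n, a (t + 1) = a t + y k ∧
      ⟪a t, y k⟫ ≤ if t = 0 then 0 else b * ‖a t‖ ^ (1 - ε))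
    (hconv : ∀ k : Fin n, b * ‖a tc‖ ^ (1 - ε) < ⟪a tc, y k⟫) :
    (1 + 2 * ε)⁻¹ * γd ≤
      (Finset.univ.inf' (Finset.univ_nonempty_iff.mpr ⟨⟨0, hn⟩⟩)
        (fun k : Fin n => ⟪(‖a tc‖)⁻¹ • a tc, y k⟫)) ∧
    (1 - 2 * ε) * γd ≤ (1 + 2 * ε)⁻¹ * γd :=
  ⟨Finset.le_inf' _ _ fun k _ => by
    simpa only [two_mul, add_assoc] using stmt15_general ⟨ha0, hrun⟩ (fun k => hR.2 ⟨k, rfl⟩)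
      hu.le hγd hmargin hε (by linarith) hε hbeq.ge htc (hconv k).le,
  mul_le_mul_of_nonneg_right (one_sub_le_inv_one_add (by linarith)) hγd.le⟩
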